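/- arXiv:cs/9811019 — 2 statements merged into one kernel-verified Lean document; each statement's English description precedes it below -/
import Mathlib

section
/- If a simple open polygonal chain in ℝ³ lies on the surface of a convex polytope (every edge of the chain is contained in the topological boundary of a compact convex set with nonempty interior), then the chain can be straightened, i.e., there is a motion (a continuous, simplicity-preserving, edge-length-preserving deformation) taking it to a straight configuration. -/
noncomputable section

/-- Three-dimensional Euclidean space. -/
abbrev E3 := EuclideanSpace ℝ (Fin 3)

/-- `v 0, …, v n` is a simple open polygonal chain in ℝ³: `n ≥ 1`, the vertices are
pairwise distinct, and two edges `[v i, v (i+1)]`, `[v j, v (j+1)]` (for `i < j < n`)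
are disjoint unless they are consecutive (`j = i + 1`), in which case they meet
exactly in the common vertex `v j`. -/
def IsSimpleOpenChain (n : ℕ) (v : ℕ → E3) : Prop :=
  1 ≤ n ∧
  (∀ i j, i ≤ n → j ≤ n → i ≠ j → v i ≠ v j) ∧
  (∀ i j, i < j → j < n →
    segment ℝ (v i) (v (i + 1)) ∩ segment ℝ (v j) (v (j + 1)) =
      if i + 1 = j then {v j} else ∅)

/-- A motion of the open chain `v 0, …, v n`: a continuous family of configurations
over the time interval `[0,1]`, starting at `v`, remaining a simple open chain at
all times, and preserving all edge lengths. -/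
def IsChainMotion (n : ℕ) (v : ℕ → E3) (γ : ℝ → ℕ → E3) : Prop :=
  (∀ i, i ≤ n → ContinuousOn (fun t => γ t i) (Set.Icc 0 1)) ∧
  (∀ i, i ≤ n → γ 0 i = v i) ∧
  (∀ t ∈ Set.Icc (0 : ℝ) 1, IsSimpleOpenChain n (γ t)) ∧
  (∀ t ∈ Set.Icc (0 : ℝ) 1, ∀ i, i < n → ‖γ t (i + 1) - γ t i‖ = ‖v (i + 1) - v i‖)

/-- The configuration `w` is a straightening of the chain `v 0, …, v n`: all vertices
lie on a line, in order, with consecutive distances the original edge lengths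
`ℓ j = ‖v (j+1) - v j‖`. -/
def IsStraightening (n : ℕ) (v : ℕ → E3) (w : ℕ → E3) : Prop :=
  ∃ (p u : E3), ‖u‖ = 1 ∧
    ∀ i, i ≤ n → w i = p + (∑ j ∈ Finset.range i, ‖v (j + 1) - v j‖) • u

/-- The open chain `v 0, …, v n` can be straightened: there is a motion whose final
configuration is straight. -/
def CanBeStraightened (n : ℕ) (v : ℕ → E3) : Prop :=
  ∃ γ : ℝ → ℕ → E3, IsChainMotion n v γ ∧ IsStraightening n v (γ 1)

/-!
Fix an interior point `c` of the convex body and straighten the chain from its initial end, keeping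
at stage `k` the first `k` edges on the ray from `v k` pointing away from `c`. A linear functional
`f` supporting the body along the edge `[v k, v (k + 1)]` is constant on that edge and maximal
there. So the direction `v k - v (k + 1)` of the edge and the direction `v k - c` of the arm lie in
the half-space `0 ≤ f`, while `v (k + 1) - c` lies in the open half-space `0 < f`. Turning both
linearly towards the latter makes `f` strictly decreasing along the moving edges and keeps it there
above its values on the rest of the chain. Hence no two edges ever collide, and at the end the arm
has absorbed the edge.
-/

section Module

variable {E : Type*} [AddCommGroup E] [Module ℝ E] {n m : ℕ} {v w : ℕ → E}

theorem vertex_mem_of_forall_segment_subset {s : Set E} (hn : 0 < n)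
    (hedges : ∀ i < n, segment ℝ (v i) (v (i + 1)) ⊆ s) {i : ℕ} (hi : i ≤ n) : v i ∈ s := by
  rcases hi.lt_or_eq with hi | rfl
  · exact hedges i hi (left_mem_segment ℝ _ _)
  · obtain ⟨i, rfl⟩ := Nat.exists_eq_add_one.2 hn
    exact hedges i i.lt_succ_self (right_mem_segment ℝ _ _)

/-- Simple open polygonal chains with `n ≥ 1` edges in a real vector space. Requiring a common point
of two edges to be the terminal vertex of the earlier one already forces the vertices to be distinct
and non-consecutive edges to be disjoint, see `isSimpleOpenChain_iff`. -/
structure IsSimpleChain (n : ℕ) (v : ℕ → E) : Prop where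
  pos : 0 < n
  ne_succ : ∀ i < n, v i ≠ v (i + 1)
  inter_subset : ∀ i j, i < j → j < n →
    segment ℝ (v i) (v (i + 1)) ∩ segment ℝ (v j) (v (j + 1)) ⊆ {v (i + 1)}

theorem IsSimpleChain.vertex_ne (hv : IsSimpleChain n v) {i j : ℕ} (hij : i < j) (hj : j ≤ n) :
    v i ≠ v j := by
  obtain ⟨j, rfl⟩ := Nat.exists_eq_add_one_of_ne_zero (Nat.ne_zero_of_lt hij)
  intro heq
  rcases (Nat.lt_succ_iff.1 hij).eq_or_lt with rfl | hlt
  · exact hv.ne_succ i hj heq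
  · exact hv.ne_succ i (hlt.trans hj) <| hv.inter_subset i j hlt hj
      ⟨left_mem_segment ℝ _ _, heq ▸ right_mem_segment ℝ _ _⟩

theorem IsSimpleChain.segment_inter_segment (hv : IsSimpleChain n v) {i j : ℕ} (hij : i < j)
    (hj : j < n) :
    segment ℝ (v i) (v (i + 1)) ∩ segment ℝ (v j) (v (j + 1)) =
      if i + 1 = j then {v j} else ∅ := by
  split_ifs with hsucc
  · subst hsucc
    exact (hv.inter_subset i _ hij hj).antisymm <| Set.singleton_subset_iff.2
      ⟨right_mem_segment ℝ _ _, left_mem_segment ℝ _ _⟩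
  · refine Set.eq_empty_of_forall_notMem fun x hx => ?_
    obtain rfl : x = v (i + 1) := hv.inter_subset i j hij hj hx
    have hlt : i + 1 < j := by omega
    exact hv.ne_succ (i + 1) (hlt.trans hj) <| hv.inter_subset (i + 1) j hlt hj
      ⟨left_mem_segment ℝ _ _, hx.2⟩

theorem eq_right_of_mem_segment_of_map_le (f : E →ₗ[ℝ] ℝ) {a b x : E} (hba : f b < f a)
    (hx : x ∈ segment ℝ a b) (hxb : f x ≤ f b) : x = b := by
  rw [segment_eq_image_lineMap] at hx
  obtain ⟨t, ⟨-, ht⟩, rfl⟩ := hx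
  simp only [AffineMap.lineMap_apply_module, map_add, map_smul, smul_eq_mul] at hxb
  obtain rfl : t = 1 := by nlinarith
  exact AffineMap.lineMap_apply_one a b

theorem map_lineMap_pos (f : E →ₗ[ℝ] ℝ) {a b : E} (ha : 0 ≤ f a) (hb : 0 < f b) {t : ℝ}
    (ht : 0 < t) (ht1 : t ≤ 1) : 0 < f (AffineMap.lineMap a b t) := by
  simp only [AffineMap.lineMap_apply_module, map_add, map_smul, smul_eq_mul]
  exact add_pos_of_nonneg_of_pos (mul_nonneg (sub_nonneg.2 ht1) ha) (mul_pos ht hb)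

theorem IsSimpleChain.of_map_lt (hv : IsSimpleChain n v) (f : E →ₗ[ℝ] ℝ)
    (hwv : ∀ i, m ≤ i → w i = v i) (hlt : ∀ i < m, f (w (i + 1)) < f (w i))
    (hle : ∀ i, m ≤ i → i ≤ n → f (v i) ≤ f (v m)) : IsSimpleChain n w := by
  have hanti : StrictAntiOn (f ∘ w) (Set.Iic m) := strictAntiOn_Iic_of_succ_lt hlt
  have hle_succ : ∀ i < m, ∀ j, i < j → j ≤ n → f (w j) ≤ f (w (i + 1)) := by
    intro i hi j hij hj
    rcases le_total j m with hjm | hjm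
    · exact hanti.antitoneOn hi hjm hij
    · calc f (w j) ≤ f (w m) := by rw [hwv j hjm, hwv m le_rfl]; exact hle j hjm hj
        _ ≤ f (w (i + 1)) := hanti.antitoneOn hi Set.self_mem_Iic hi
  refine ⟨hv.pos, fun i hi => ?_, fun i j hij hj => ?_⟩
  · rcases lt_or_ge i m with him | him
    · exact fun heq => (hlt i him).ne' (congrArg f heq)
    · rw [hwv i him, hwv (i + 1) (by omega)]
      exact hv.ne_succ i hi
  · rcases lt_or_ge i m with him | him
    · rintro x ⟨hxi, hxj⟩
      have hfx : f x ≤ f (w (i + 1)) := (convex_halfSpace_le f.isLinear _).segment_subset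
        (hle_succ i him j hij hj.le) (hle_succ i him (j + 1) (by omega) hj) hxj
      exact eq_right_of_mem_segment_of_map_le f (hlt i him) hxi hfx
    · rw [hwv i him, hwv (i + 1) (by omega), hwv j (by omega), hwv (j + 1) (by omega)]
      exact hv.inter_subset i j hij hj

end Module

section Normalize

open NormedSpace

variable {E : Type*} [NormedAddCommGroup E] [NormedSpace ℝ E]

theorem continuousOn_normalize : ContinuousOn (normalize : E → E) {0}ᶜ :=
  (continuousOn_id.norm.inv₀ fun _ hx => norm_ne_zero_iff.2 hx).smul continuousOn_id

theorem map_normalize_pos (f : E →ₗ[ℝ] ℝ) {x : E} (hx : 0 < f x) : 0 < f (normalize x) := by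
  rw [NormedSpace.normalize, map_smul, smul_eq_mul]
  exact mul_pos (inv_pos.2 (norm_pos_iff.2 (ne_zero_of_map hx.ne'))) hx

end Normalize

section Redirect

open NormedSpace

variable {E : Type*} [NormedAddCommGroup E] [NormedSpace ℝ E] {n m k : ℕ} {v d : ℕ → E}

/-- The configuration space of the chain `v`: the simple chains with `n` edges having the same edge
lengths. Motions are its paths for the product topology on `ℕ → E`; the vertices beyond `n`, which
are not part of the chain, only have to move continuously. -/
def chainConfigurations (n : ℕ) (v : ℕ → E) : Set (ℕ → E) :=
  {w | IsSimpleChain n w ∧ ∀ i < n, ‖w (i + 1) - w i‖ = ‖v (i + 1) - v i‖}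

/-- The chain `v` with its first `m` edges redirected: vertices from `v m` on stay in place, and
going backwards from `v m` the edge from vertex `j + 1` to vertex `j` points in direction `d j`. For
`m ≤ i` the index set `Ico i m` is empty and `max i m = i`, so the formula returns `v i`. -/
def redirectEdges (v : ℕ → E) (m : ℕ) (d : ℕ → E) (i : ℕ) : E :=
  v (max i m) + ∑ j ∈ Finset.Ico i m, ‖v (j + 1) - v j‖ • d j

theorem redirectEdges_of_ge {i : ℕ} (h : m ≤ i) : redirectEdges v m d i = v i := by
  simp [redirectEdges, h]

theorem redirectEdges_of_le {i : ℕ} (h : i ≤ m) :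
    redirectEdges v m d i = v m + ∑ j ∈ Finset.Ico i m, ‖v (j + 1) - v j‖ • d j := by
  rw [redirectEdges, max_eq_right h]

theorem redirectEdges_zero : redirectEdges v 0 d = v :=
  funext fun i => redirectEdges_of_ge i.zero_le

theorem redirectEdges_eq_add_succ {i : ℕ} (h : i < m) :
    redirectEdges v m d i = redirectEdges v m d (i + 1) + ‖v (i + 1) - v i‖ • d i := by
  rw [redirectEdges_of_le h.le, redirectEdges_of_le h, Finset.sum_eq_sum_Ico_succ_bot h]
  abel

theorem redirectEdges_congr {d' : ℕ → E} (h : ∀ j < m, d j = d' j) :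
    redirectEdges v m d = redirectEdges v m d' := by
  funext i
  exact congrArg (v (max i m) + ·) <| Finset.sum_congr rfl fun j hj => by
    rw [h j (Finset.mem_Ico.1 hj).2]

theorem redirectEdges_succ (hd : d k = normalize (v k - v (k + 1))) :
    redirectEdges v (k + 1) d = redirectEdges v k d := by
  funext i
  rcases lt_or_ge k i with h | h
  · rw [redirectEdges_of_ge h, redirectEdges_of_ge h.le]
  · rw [redirectEdges_of_le (h.trans k.le_succ), redirectEdges_of_le h,
      Finset.sum_Ico_succ_top h, hd, norm_sub_rev (v (k + 1)), norm_smul_normalize]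
    abel

theorem redirectEdges_const {u : E} {i : ℕ} (h : i ≤ m) :
    redirectEdges v m (fun _ => u) i =
      redirectEdges v m (fun _ => u) 0 + (∑ j ∈ Finset.range i, ‖v (j + 1) - v j‖) • -u := by
  rw [redirectEdges_of_le h, redirectEdges_of_le m.zero_le, ← Finset.range_eq_Ico,
    ← Finset.sum_smul, ← Finset.sum_smul, ← Finset.sum_range_add_sum_Ico _ h]
  module

theorem continuousOn_redirectEdges {X : Type*} [TopologicalSpace X] {s : Set X} {d : X → ℕ → E}
    (hd : ∀ j < m, ContinuousOn (fun t => d t j) s) :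
    ContinuousOn (fun t => redirectEdges v m (d t)) s :=
  continuousOn_pi.2 fun _ => continuousOn_const.add <| continuousOn_finsetSum _ fun j hj =>
    continuousOn_const.smul (hd j (Finset.mem_Ico.1 hj).2)

theorem redirectEdges_mem_chainConfigurations (hv : IsSimpleChain n v) (hm : m ≤ n)
    (f : E →ₗ[ℝ] ℝ) (hle : ∀ i, m ≤ i → i ≤ n → f (v i) ≤ f (v m)) (hd : ∀ j < m, ‖d j‖ = 1)
    (hfd : ∀ j < m, 0 < f (d j)) : redirectEdges v m d ∈ chainConfigurations n v := by
  refine ⟨hv.of_map_lt f (fun i => redirectEdges_of_ge) (fun i hi => ?_) hle, fun i _ => ?_⟩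
  · have hlen : 0 < ‖v (i + 1) - v i‖ :=
      norm_sub_pos_iff.2 (hv.ne_succ i (hi.trans_le hm)).symm
    rw [redirectEdges_eq_add_succ hi, map_add, map_smul, smul_eq_mul]
    exact lt_add_of_pos_right _ (mul_pos hlen (hfd i hi))
  · rcases lt_or_ge i m with hi | hi
    · rw [redirectEdges_eq_add_succ hi, sub_add_cancel_left, norm_neg, norm_smul, norm_norm,
        hd i hi, mul_one]
    · rw [redirectEdges_of_ge hi, redirectEdges_of_ge (hi.trans i.le_succ)]

theorem joinedIn_redirectEdges_const (hv : IsSimpleChain n v) (hm : m ≤ n) (f : E →ₗ[ℝ] ℝ)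
    (hle : ∀ i, m ≤ i → i ≤ n → f (v i) ≤ f (v m)) (hd : ∀ j < m, ‖d j‖ = 1)
    (hfd : ∀ j < m, 0 ≤ f (d j)) {u : E} (hu : ‖u‖ = 1) (hfu : 0 < f u)
    (hmem : redirectEdges v m d ∈ chainConfigurations n v) :
    JoinedIn (chainConfigurations n v) (redirectEdges v m d) (redirectEdges v m fun _ => u) := by
  let g (t : ℝ) (j : ℕ) : E := AffineMap.lineMap (d j) u t
  have hfg : ∀ j < m, ∀ t, 0 < t → t ≤ 1 → 0 < f (g t j) := fun j hj t =>
    map_lineMap_pos f (hfd j hj) hfu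
  have hg_ne : ∀ j < m, ∀ t ∈ Set.Icc (0 : ℝ) 1, g t j ≠ 0 := by
    rintro j hj t ⟨ht, ht1⟩
    rcases ht.eq_or_lt with rfl | ht
    · simpa [g] using norm_ne_zero_iff.1 ((hd j hj).trans_ne one_ne_zero)
    · exact ne_zero_of_map (hfg j hj t ht ht1).ne'
  have hstart : redirectEdges v m (fun j => normalize (g 0 j)) = redirectEdges v m d :=
    redirectEdges_congr fun j hj => by
      simp only [g, AffineMap.lineMap_apply_zero, normalize_eq_self_of_norm_eq_one (hd j hj)]
  refine JoinedIn.ofLine (f := fun t => redirectEdges v m fun j => normalize (g t j))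
    (continuousOn_redirectEdges fun j hj => continuousOn_normalize.comp
      (AffineMap.lineMap_continuous (R := ℝ)).continuousOn (hg_ne j hj)) hstart ?_ ?_
  · simp only [g, AffineMap.lineMap_apply_one, normalize_eq_self_of_norm_eq_one hu]
  · rintro _ ⟨t, ht, rfl⟩
    rcases ht.1.eq_or_lt with rfl | hpos
    · simpa only [hstart] using hmem
    · exact redirectEdges_mem_chainConfigurations hv hm f hle
        (fun j hj => norm_normalize_eq_one_iff.2 (hg_ne j hj t ht))
        (fun j hj => map_normalize_pos f (hfg j hj t hpos ht.2))

theorem joinedIn_redirectEdges_radial_succ (hv : IsSimpleChain n v) (hk : k < n) {c : E}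
    (f : E →ₗ[ℝ] ℝ) (hf : f (v k) = f (v (k + 1))) (hfc : f c < f (v (k + 1)))
    (hle : ∀ i, k + 1 ≤ i → i ≤ n → f (v i) ≤ f (v (k + 1)))
    (hmem : redirectEdges v k (fun _ => normalize (v k - c)) ∈ chainConfigurations n v) :
    JoinedIn (chainConfigurations n v) (redirectEdges v k fun _ => normalize (v k - c))
      (redirectEdges v (k + 1) fun _ => normalize (v (k + 1) - c)) := by
  have hfk : 0 < f (v k - c) := by rw [map_sub, hf]; exact sub_pos.2 hfc
  have hfk1 : 0 < f (v (k + 1) - c) := by rw [map_sub]; exact sub_pos.2 hfc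
  let d := Function.update (fun _ => normalize (v k - c)) k (normalize (v k - v (k + 1)))
  have hd_edge : d k = normalize (v k - v (k + 1)) := Function.update_self ..
  have hd_arm : ∀ j < k, d j = normalize (v k - c) := fun j hj => Function.update_of_ne hj.ne ..
  have hunit : ∀ j < k + 1, ‖d j‖ = 1 := by
    intro j hj
    rcases (Nat.lt_succ_iff.1 hj).lt_or_eq with hj | rfl
    · rw [hd_arm j hj, norm_normalize_eq_one_iff]
      exact ne_zero_of_map hfk.ne'
    · rw [hd_edge, norm_normalize_eq_one_iff]
      exact sub_ne_zero.2 (hv.ne_succ j hk)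
  have hnonneg : ∀ j < k + 1, 0 ≤ f (d j) := by
    intro j hj
    rcases (Nat.lt_succ_iff.1 hj).lt_or_eq with hj | rfl
    · rw [hd_arm j hj]
      exact (map_normalize_pos f hfk).le
    · rw [hd_edge, NormedSpace.normalize, map_smul, map_sub, hf, sub_self, smul_zero]
  have hstart : redirectEdges v k (fun _ => normalize (v k - c)) = redirectEdges v (k + 1) d := by
    rw [redirectEdges_succ hd_edge, redirectEdges_congr hd_arm]
  rw [hstart] at hmem ⊢
  exact joinedIn_redirectEdges_const hv hk f hle hunit hnonneg
    (norm_normalize_eq_one_iff.2 (ne_zero_of_map hfk1.ne')) (map_normalize_pos f hfk1) hmem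

end Redirect

section Support

variable {E : Type*} [AddCommGroup E] [Module ℝ E] [TopologicalSpace E] [IsTopologicalAddGroup E]
  [ContinuousSMul ℝ E] {C : Set E} {c x y : E}

theorem exists_support_of_notMem_interior (hC : Convex ℝ C)
    (hint : (interior C).Nonempty) (hx : x ∉ interior C) :
    ∃ f : StrongDual ℝ E, (∀ z ∈ interior C, f z < f x) ∧ ∀ z ∈ closure C, f z ≤ f x := by
  obtain ⟨f, hf⟩ := geometric_hahn_banach_open_point hC.interior isOpen_interior hx
  refine ⟨f, hf, ?_⟩
  rw [← hC.closure_interior_eq_closure_of_nonempty_interior hint]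
  exact closure_minimal (fun z hz => (hf z hz).le) (isClosed_le f.continuous continuous_const)

theorem exists_support_of_segment_subset_frontier (hC : Convex ℝ C)
    (hc : c ∈ interior C) (hxy : segment ℝ x y ⊆ frontier C) :
    ∃ f : StrongDual ℝ E, f x = f y ∧ f c < f y ∧ ∀ z ∈ closure C, f z ≤ f y := by
  obtain ⟨f, hlt, hle⟩ := exists_support_of_notMem_interior hC ⟨c, hc⟩
    (hxy (midpoint_mem_segment x y)).2
  have hmid : f (midpoint ℝ x y) = (f x + f y) / 2 := by
    rw [midpoint_eq_smul_add, map_smul, map_add, smul_eq_mul, invOf_eq_inv, inv_mul_eq_div]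
  have hx := hle x (hxy (left_mem_segment ℝ x y)).1
  have hy := hle y (hxy (right_mem_segment ℝ x y)).1
  have heq : f (midpoint ℝ x y) = f y := by linarith
  exact ⟨f, by linarith, heq ▸ hlt c hc, heq ▸ hle⟩

end Support

section Straightening

open NormedSpace

variable {E : Type*} [NormedAddCommGroup E] [NormedSpace ℝ E] {n : ℕ} {v : ℕ → E} {C : Set E}

theorem joinedIn_redirectEdges_radial (hv : IsSimpleChain n v) (hC : Convex ℝ C) {c : E}
    (hc : c ∈ interior C) (hedges : ∀ i < n, segment ℝ (v i) (v (i + 1)) ⊆ frontier C) {k : ℕ}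
    (hk : k ≤ n) :
    JoinedIn (chainConfigurations n v) v (redirectEdges v k fun _ => normalize (v k - c)) := by
  induction k with
  | zero =>
    rw [redirectEdges_zero]
    exact JoinedIn.refl ⟨hv, fun _ _ => rfl⟩
  | succ k ih =>
    have hjoin := ih (Nat.le_of_succ_le hk)
    obtain ⟨f, hf, hfc, hle⟩ := exists_support_of_segment_subset_frontier hC hc (hedges k hk)
    exact hjoin.trans <| joinedIn_redirectEdges_radial_succ hv hk f.toLinearMap hf hfc
      (fun i _ hi => hle _ (vertex_mem_of_forall_segment_subset hv.pos hedges hi).1)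
      hjoin.target_mem

theorem straightenable_of_on_convex_surface_general (hv : IsSimpleChain n v) (hC : Convex ℝ C)
    (hint : (interior C).Nonempty)
    (hedges : ∀ i < n, segment ℝ (v i) (v (i + 1)) ⊆ frontier C) :
    ∃ w, JoinedIn (chainConfigurations n v) v w ∧ ∃ p u : E, ‖u‖ = 1 ∧
      ∀ i ≤ n, w i = p + (∑ j ∈ Finset.range i, ‖v (j + 1) - v j‖) • u := by
  obtain ⟨c, hc⟩ := hint
  have hvn : v n ∉ interior C := (vertex_mem_of_forall_segment_subset hv.pos hedges le_rfl).2
  have hunit : ‖normalize (v n - c)‖ = 1 :=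
    norm_normalize_eq_one_iff.2 (sub_ne_zero.2 (ne_of_mem_of_not_mem hc hvn).symm)
  exact ⟨_, joinedIn_redirectEdges_radial hv hC hc hedges le_rfl, _, -normalize (v n - c),
    by rw [norm_neg, hunit], fun _ => redirectEdges_const⟩

end Straightening

theorem isSimpleOpenChain_iff {n : ℕ} {v : ℕ → E3} : IsSimpleOpenChain n v ↔ IsSimpleChain n v := by
  constructor
  · rintro ⟨hpos, hne, hinter⟩
    refine ⟨hpos, fun i hi => hne i (i + 1) hi.le hi (by omega), fun i j hij hj => ?_⟩
    rw [hinter i j hij hj]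
    split_ifs with hsucc
    · rw [hsucc]
    · exact Set.empty_subset _
  · refine fun hv => ⟨hv.pos, fun i j hi hj hij => ?_, fun i j => hv.segment_inter_segment⟩
    rcases hij.lt_or_gt with h | h
    · exact hv.vertex_ne h hj
    · exact (hv.vertex_ne h hi).symm

theorem canBeStraightened_of_joinedIn {n : ℕ} {v w : ℕ → E3}
    (h : JoinedIn (chainConfigurations n v) v w) (hw : IsStraightening n v w) :
    CanBeStraightened n v := by
  obtain ⟨γ, hγ⟩ := h
  have hmem (t : ℝ) : γ.extend t ∈ chainConfigurations n v := hγ _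
  refine ⟨γ.extend, ⟨fun i _ => ?_, fun i _ => by rw [γ.extend_zero],
    fun t _ => isSimpleOpenChain_iff.2 (hmem t).1, fun t _ => (hmem t).2⟩, by rwa [γ.extend_one]⟩
  exact ((continuous_apply i).comp γ.continuous_extend).continuousOn

/-- A simple open polygonal chain in ℝ³ lying on the surface of a
convex polytope (every edge contained in the topological boundary of a compact
convex set with nonempty interior) can be straightened. -/
theorem straightenable_of_on_convex_surface (n : ℕ) (v : ℕ → E3)
    (hsimple : IsSimpleOpenChain n v)
    (C : Set E3) (hconv : Convex ℝ C) (hcpt : IsCompact C)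
    (hint : (interior C).Nonempty)
    (hedges : ∀ i, i < n → segment ℝ (v i) (v (i + 1)) ⊆ frontier C) :
    CanBeStraightened n v := by
  obtain ⟨w, hjoin, hstraight⟩ := straightenable_of_on_convex_surface_general
    (isSimpleOpenChain_iff.1 hsimple) hconv hint hedges
  exact canBeStraightened_of_joinedIn hjoin hstraight
end
end

section
/- There exists a locked simple closed polygonal chain in ℝ³, i.e., a simple closed polygonal chain that cannot be convexified by any motion. -/
noncomputable section

/-- `v 0, …, v (n-1)` is a simple closed polygonal chain (polygon) in ℝ³: `n ≥ 3`,
the vertices are pairwise distinct, and two edges `[v i, v ((i+1) % n)]`,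
`[v j, v ((j+1) % n)]` (for `i < j < n`) are disjoint unless they are cyclically
consecutive, in which case they meet exactly in their common vertex. -/
def IsSimpleClosedChain (n : ℕ) (v : ℕ → E3) : Prop :=
  3 ≤ n ∧
  (∀ i j, i < n → j < n → i ≠ j → v i ≠ v j) ∧
  (∀ i j, i < j → j < n →
    segment ℝ (v i) (v ((i + 1) % n)) ∩ segment ℝ (v j) (v ((j + 1) % n)) =
      if i + 1 = j then {v j}
      else if i = 0 ∧ j = n - 1 then {v 0}
      else ∅)

/-- A motion of the closed chain `v 0, …, v (n-1)`: a continuous family of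
configurations over `[0,1]`, starting at `v`, remaining a simple closed chain at
all times, and preserving all edge lengths. -/
def IsClosedChainMotion (n : ℕ) (v : ℕ → E3) (γ : ℝ → ℕ → E3) : Prop :=
  (∀ i, i < n → ContinuousOn (fun t => γ t i) (Set.Icc 0 1)) ∧
  (∀ i, i < n → γ 0 i = v i) ∧
  (∀ t ∈ Set.Icc (0 : ℝ) 1, IsSimpleClosedChain n (γ t)) ∧
  (∀ t ∈ Set.Icc (0 : ℝ) 1, ∀ i, i < n →
    ‖γ t ((i + 1) % n) - γ t i‖ = ‖v ((i + 1) % n) - v i‖)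

/-- The configuration `w 0, …, w (n-1)` is a planar convex polygon: all vertices lie
in a common plane (2-dimensional affine subspace), they are in strictly convex
position (no vertex is in the convex hull of the others), and the cyclic order of
the chain agrees with the order of the vertices along the boundary of their convex
hull: each edge lies on a supporting line of the configuration, with all other
vertices strictly on one side. -/
def IsConvexConfiguration (n : ℕ) (w : ℕ → E3) : Prop :=
  (∃ S : AffineSubspace ℝ E3, Module.finrank ℝ S.direction = 2 ∧
    ∀ i, i < n → w i ∈ S) ∧
  (∀ i, i < n → w i ∉ convexHull ℝ {x | ∃ j, j < n ∧ j ≠ i ∧ x = w j}) ∧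
  (∀ i, i < n → ∃ f : E3 →ₗ[ℝ] ℝ,
    f (w i) = f (w ((i + 1) % n)) ∧
    ∀ j, j < n → j ≠ i → j ≠ (i + 1) % n → f (w j) < f (w i))

/-- The closed chain `v 0, …, v (n-1)` can be convexified: there is a motion whose
final configuration is a planar convex polygon. -/
def CanBeConvexified (n : ℕ) (v : ℕ → E3) : Prop :=
  ∃ γ : ℝ → ℕ → E3, IsClosedChainMotion n v γ ∧ IsConvexConfiguration n (γ 1)

/-!
In the hexagonal trefoil with vertices `y 0, z 0, y 1, z 1, y 2, z 2`, each of the triangles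
`y i, z i, y (i + 1)` is pierced by the edge `z (i + 1), y (i + 2)`. In homogeneous coordinates
the three resulting linear relations can be scaled so as to add up to zero, which amounts to nine
nonnegative weights solving eight homogeneous linear equations. As long as the hexagon stays
simple, no nonzero solution has a vanishing weight: otherwise two disjoint edges would meet.
The existence of a normalized solution is a closed condition because the simplex of weights is
compact. It is also an open one, since strict positivity forces the solution to be unique, hence
the equations to be nonsingular. So it persists along every deformation through simple hexagons,
whatever happens to the edge lengths. A convex hexagon admits no such weights, because a
supporting line through an edge has the opposite triangle strictly on one side.
-/

open Filter Topology

section PositiveKernel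

variable {X ι W : Type*} [TopologicalSpace X] [NormedAddCommGroup W] [NormedSpace ℝ W]

theorem eq_zero_of_forall_add_smul_pos [Finite ι] {w u : ι → ℝ} (hw : 0 ≤ w)
    (h : ∀ τ : ℝ, 0 ≤ w + τ • u → ∀ i, 0 < (w + τ • u) i) : u = 0 := by
  have hclosed : IsClosed {τ : ℝ | 0 ≤ w + τ • u} := isClosed_le continuous_const (by fun_prop)
  have hopen : IsOpen {τ : ℝ | 0 ≤ w + τ • u} := by
    have heq : {τ : ℝ | 0 ≤ w + τ • u} = ⋂ i, {τ : ℝ | 0 < (w + τ • u) i} := by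
      ext τ
      simpa only [Set.mem_iInter] using ⟨h τ, fun hτ i => (hτ i).le⟩
    rw [heq]
    exact isOpen_iInter_of_finite fun i =>
      isOpen_lt continuous_const ((continuous_apply i).comp (by fun_prop))
  have huniv := IsClopen.eq_univ ⟨hclosed, hopen⟩ ⟨0, by simpa using hw⟩
  ext i
  by_contra hi
  have hneg : 0 ≤ w i + -(w i + 1) / u i * u i :=
    (huniv.ge (Set.mem_univ (-(w i + 1) / u i)) : 0 ≤ w + _ • u) i
  rw [div_mul_cancel₀ _ hi] at hneg
  linarith

variable [Fintype ι]

/-- `L` together with the total weight, so that a zero of `L` in the standard simplex is a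
nonnegative `u` with `withTotal L u = (0, 1)`. -/
def withTotal (L : (ι → ℝ) →L[ℝ] W) : (ι → ℝ) →L[ℝ] W × ℝ :=
  L.prod (∑ i, ContinuousLinearMap.proj i)

@[simp]
theorem withTotal_apply (L : (ι → ℝ) →L[ℝ] W) (u : ι → ℝ) : withTotal L u = (L u, ∑ i, u i) := by
  simp [withTotal]

theorem continuous_withTotal :
    Continuous (withTotal : ((ι → ℝ) →L[ℝ] W) → ((ι → ℝ) →L[ℝ] W × ℝ)) :=
  continuous_clm_apply.2 fun u => by
    simp only [withTotal_apply]
    fun_prop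

theorem injective_withTotal_of_forall_pos {L : (ι → ℝ) →L[ℝ] W}
    (hpos : ∀ u ∈ stdSimplex ℝ ι, L u = 0 → ∀ i, 0 < u i)
    (hex : ∃ w ∈ stdSimplex ℝ ι, L w = 0) : Function.Injective (withTotal L) := by
  obtain ⟨w, ⟨hw, hw1⟩, hLw⟩ := hex
  refine (injective_iff_map_eq_zero _).2 fun u hu => ?_
  obtain ⟨hLu, hu0⟩ : L u = 0 ∧ ∑ i, u i = 0 := by simpa using hu
  refine eq_zero_of_forall_add_smul_pos hw fun τ hτ => hpos _ ⟨hτ, ?_⟩ (by simp [hLw, hLu])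
  simp [Finset.sum_add_distrib, ← Finset.mul_sum, hw1, hu0]

theorem eventually_exists_mem_stdSimplex_map_eq_zero [FiniteDimensional ℝ W]
    (hdim : Module.finrank ℝ W + 1 = Fintype.card ι) {L : (ι → ℝ) →L[ℝ] W}
    (hpos : ∀ u ∈ stdSimplex ℝ ι, L u = 0 → ∀ i, 0 < u i)
    (hex : ∃ w ∈ stdSimplex ℝ ι, L w = 0) :
    ∀ᶠ L' in 𝓝 L, ∃ u ∈ stdSimplex ℝ ι, L' u = 0 := by
  let e : (ι → ℝ) ≃L[ℝ] W × ℝ := (LinearEquiv.ofInjectiveOfFinrankEq (withTotal L).toLinearMap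
    (injective_withTotal_of_forall_pos hpos hex) (by simp [hdim])).toContinuousLinearEquiv
  have he : (e : (ι → ℝ) →L[ℝ] W × ℝ) = withTotal L := rfl
  obtain ⟨w, hw, hLw⟩ := hex
  have hwL : (withTotal L).inverse (0, 1) = w := by
    rw [← he, ContinuousLinearMap.inverse_equiv]
    exact e.symm_apply_eq.2 (by simp [← ContinuousLinearEquiv.coe_coe, he, hLw, hw.2])
  have hcont : ContinuousAt (fun L' => (withTotal L').inverse (0, 1)) L := by
    have hinv := (contDiffAt_map_inverse (𝕜 := ℝ) (n := 0) e).continuousAt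
    rw [he] at hinv
    exact (hinv.comp continuous_withTotal.continuousAt).clm_apply continuousAt_const
  have hinverse_pos : ∀ᶠ L' in 𝓝 L, ∀ i, 0 < (withTotal L').inverse (0, 1) i :=
    eventually_all.2 fun i => ((continuous_apply i).continuousAt.comp hcont).eventually_const_lt
      (by simpa [hwL] using hpos w hw hLw i)
  have hinvertible : ∀ᶠ L' in 𝓝 L, (withTotal L').IsInvertible :=
    continuous_withTotal.continuousAt.eventually (he ▸ e.nhds)
  filter_upwards [hinverse_pos, hinvertible] with L' hpos' hL'
  have hsol : withTotal L' ((withTotal L').inverse (0, 1)) = (0, 1) := hL'.self_apply_inverse _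
  rw [withTotal_apply, Prod.mk.injEq] at hsol
  exact ⟨_, ⟨fun i => (hpos' i).le, hsol.2⟩, hsol.1⟩

theorem isClosed_setOf_exists_mem_stdSimplex_map_eq_zero :
    IsClosed {L : (ι → ℝ) →L[ℝ] W | ∃ u ∈ stdSimplex ℝ ι, L u = 0} := by
  have hclosed : IsClosed {p : ((ι → ℝ) →L[ℝ] W) × stdSimplex ℝ ι | p.1 p.2 = 0} :=
    isClosed_eq (by fun_prop) continuous_const
  convert isClosedMap_fst_of_compactSpace _ hclosed using 1
  ext L
  constructor
  · rintro ⟨u, hu, hLu⟩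
    exact ⟨(L, ⟨u, hu⟩), hLu, rfl⟩
  · rintro ⟨⟨_, u⟩, hLu, rfl⟩
    exact ⟨u, u.2, hLu⟩

theorem exists_mem_stdSimplex_map_eq_zero_of_preconnectedSpace [PreconnectedSpace X]
    [FiniteDimensional ℝ W] (hdim : Module.finrank ℝ W + 1 = Fintype.card ι)
    {L : X → (ι → ℝ) →L[ℝ] W} (hL : Continuous L)
    (hpos : ∀ x, ∀ u ∈ stdSimplex ℝ ι, L x u = 0 → ∀ i, 0 < u i)
    {x : X} (hx : ∃ u ∈ stdSimplex ℝ ι, L x u = 0) (y : X) :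
    ∃ u ∈ stdSimplex ℝ ι, L y u = 0 := by
  have hclopen : IsClopen {x | ∃ u ∈ stdSimplex ℝ ι, L x u = 0} :=
    ⟨isClosed_setOf_exists_mem_stdSimplex_map_eq_zero.preimage hL,
      isOpen_iff_mem_nhds.2 fun x hx => hL.continuousAt.eventually
        (eventually_exists_mem_stdSimplex_map_eq_zero hdim (hpos x) hx)⟩
  exact (hclopen.eq_univ ⟨x, hx⟩).ge (Set.mem_univ y)

end PositiveKernel

/-- The cones spanned by `a, b` and by `c, d` meet only at the origin, which moreover has no
nontrivial nonnegative representation in either of them. -/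
def ConesSeparated {V : Type*} [AddCommGroup V] [Module ℝ V] (a b c d : V) : Prop :=
  ∀ p q r s : ℝ, 0 ≤ p → 0 ≤ q → 0 ≤ r → 0 ≤ s → p • a + q • b = r • c + s • d →
    p = 0 ∧ q = 0 ∧ r = 0 ∧ s = 0

section Interlacing

variable {V : Type*} [AddCommGroup V] [Module ℝ V] {y z : Fin 3 → V} {u : Fin 3 × Fin 3 → ℝ}

/-- For a closed hexagon `y 0, z 0, y 1, z 1, y 2, z 2`, the failure of the weighted triangle
`y i, z i, y (i + 1)` to be balanced by the weighted edge `z (i + 1), y (i + 2)`. The weight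
`u (i, j)` belongs to the `j`-th vertex of the `i`-th triangle, and the weights of the edges are
chosen so that the three defects add up to zero. -/
def interlacingDefect (y z : Fin 3 → V) (u : Fin 3 × Fin 3 → ℝ) (i : Fin 3) : V :=
  u (i, 0) • y i + u (i, 1) • z i + u (i, 2) • y (i + 1) -
    (u (i + 1, 1) • z (i + 1) + (u (i + 1, 2) + u (i + 2, 0)) • y (i + 2))

theorem sum_interlacingDefect (y z : Fin 3 → V) (u : Fin 3 × Fin 3 → ℝ) :
    ∑ i, interlacingDefect y z u i = 0 := by
  simp only [Fin.sum_univ_three, interlacingDefect, Fin.reduceAdd, zero_add]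
  module

theorem interlacingDefect_eq_zero_iff {i : Fin 3} :
    interlacingDefect y z u i = 0 ↔
      u (i, 0) • y i + u (i, 1) • z i + u (i, 2) • y (i + 1) =
        u (i + 1, 1) • z (i + 1) + (u (i + 1, 2) + u (i + 2, 0)) • y (i + 2) :=
  sub_eq_zero

/-- In the closed hexagon `y 0, z 0, y 1, z 1, y 2, z 2`, every edge `z (i + 1), y (i + 2)` is
separated from the edges `z i, y (i + 1)` and `y i, z i`. -/
structure HexagonSeparated (y z : Fin 3 → V) : Prop where
  zy_zy : ∀ i, ConesSeparated (z i) (y (i + 1)) (z (i + 1)) (y (i + 2))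
  yz_zy : ∀ i, ConesSeparated (y i) (z i) (z (i + 1)) (y (i + 2))

theorem HexagonSeparated.ne_zero_of_middle_ne_zero {i : Fin 3}
    (hyz : HexagonSeparated y z) (hu : ∀ k, 0 ≤ u k) (h : interlacingDefect y z u i = 0)
    (hi : u (i, 1) ≠ 0) :
    u (i, 0) ≠ 0 ∧ u (i, 2) ≠ 0 := by
  have hedge : 0 ≤ u (i + 1, 2) + u (i + 2, 0) := add_nonneg (hu _) (hu _)
  rw [interlacingDefect_eq_zero_iff] at h
  constructor <;> intro h0 <;> rw [h0] at h
  · exact hi (hyz.zy_zy i _ _ _ _ (hu _) (hu _) (hu _) hedge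
      (by linear_combination (norm := module) h)).1
  · exact hi (hyz.yz_zy i _ _ _ _ (hu _) (hu _) (hu _) hedge
      (by linear_combination (norm := module) h)).2.1

theorem HexagonSeparated.prev_eq_zero_of_middle_eq_zero
    (hyz : HexagonSeparated y z) (hu : ∀ k, 0 ≤ u k)
    (h : ∀ i, interlacingDefect y z u i = 0) {i : Fin 3} (hi : u (i, 1) = 0) :
    u (i + 2, 0) = 0 := by
  have hrel := interlacingDefect_eq_zero_iff.1 (h i)
  have hrel₂ := interlacingDefect_eq_zero_iff.1 (h (i + 2))
  have hyz₁ := hyz.yz_zy (i + 1)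
  simp only [add_assoc, Fin.reduceAdd, add_zero, hi] at hrel hrel₂ hyz₁
  by_contra hne
  have hpos : 0 < u (i + 2, 0) := (hu _).lt_of_ne' hne
  set B := u (i + 1, 2) + u (i + 2, 0)
  have hBpos : 0 < B := add_pos_of_nonneg_of_pos (hu _) hpos
  have := hu (i, 0)
  have := hu (i, 2)
  have := hu (i + 1, 0)
  have := hu (i + 1, 1)
  have := hu (i + 1, 2)
  have := hu (i + 2, 1)
  have := hu (i + 2, 2)
  -- Eliminating `y (i + 2)` between the two relations leaves one between two disjoint edges.
  obtain ⟨-, -, hz, hy⟩ := hyz₁ (u (i + 1, 2) * u (i, 2) + B * u (i + 1, 0))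
    (u (i + 2, 0) * u (i + 1, 1)) (B * u (i + 2, 1)) (B * u (i + 2, 2) + u (i + 2, 0) * u (i, 0))
    (by positivity) (by positivity) (by positivity) (by positivity)
    (by linear_combination (norm := module) -B • hrel₂ - u (i + 2, 0) • hrel)
  have hs : u (i + 2, 1) = 0 := by simpa [hBpos.ne'] using hz
  have hb : u (i + 2, 2) = 0 := by
    have hzero := (add_eq_zero_iff_of_nonneg (by positivity) (by positivity)).1 hy
    simpa [hBpos.ne'] using hzero.1
  exact hne (hyz.zy_zy i 0 (u (i, 2) + u (i + 1, 0)) 0 _ le_rfl (by positivity) le_rfl hpos.le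
    (by linear_combination (norm := module) hs • z (i + 2) + hb • y i - hrel₂)).2.2.2

theorem HexagonSeparated.eq_zero_of_middle_eq_zero
    (hyz : HexagonSeparated y z) (hu : ∀ k, 0 ≤ u k)
    (h : ∀ i, interlacingDefect y z u i = 0) {i : Fin 3} (hi : u (i, 1) = 0) :
    u (i, 0) = 0 ∧ u (i, 2) = 0 ∧ u (i + 1, 1) = 0 := by
  have ha := hyz.prev_eq_zero_of_middle_eq_zero hu h hi
  have hs : u (i + 2, 1) = 0 := by
    by_contra hs
    exact (hyz.ne_zero_of_middle_ne_zero hu (h _) hs).1 ha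
  have hrel := interlacingDefect_eq_zero_iff.1 (h i)
  have hrel₂ := interlacingDefect_eq_zero_iff.1 (h (i + 2))
  have hyz₁ := hyz.yz_zy (i + 1)
  have hzy₁ := hyz.zy_zy (i + 1)
  simp only [add_assoc, Fin.reduceAdd, add_zero, hi, ha, hs] at hrel hrel₂ hyz₁ hzy₁
  obtain ⟨hsum, -⟩ := hyz₁ (u (i, 2) + u (i + 1, 0)) 0 0 _ (add_nonneg (hu _) (hu _)) le_rfl le_rfl
    (hu (i + 2, 2)) (by linear_combination (norm := module) -hrel₂)
  have hb : u (i, 2) = 0 := ((add_eq_zero_iff_of_nonneg (hu _) (hu _)).1 hsum).1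
  obtain ⟨hs₁, -, -, ha₀⟩ := hzy₁ _ _ 0 _ (hu (i + 1, 1)) (hu (i + 1, 2)) le_rfl (hu (i, 0))
    (by linear_combination (norm := module) -hrel + hb • y (i + 1))
  exact ⟨ha₀, hb, hs₁⟩

theorem HexagonSeparated.forall_pos_of_interlacingDefect_eq_zero
    (hyz : HexagonSeparated y z) (hu : ∀ k, 0 ≤ u k) (hu0 : u ≠ 0)
    (h : ∀ i, interlacingDefect y z u i = 0) (k : Fin 3 × Fin 3) : 0 < u k := by
  have hstep := fun i => hyz.eq_zero_of_middle_eq_zero hu h (i := i)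
  have hmiddle : ∀ i, u (i, 1) ≠ 0 := by
    intro i hi
    have hzero : ∀ j, u (j, 1) = 0 := by
      have hi₁ := (hstep i hi).2.2
      intro j
      obtain rfl | rfl | rfl : j = i ∨ j = i + 1 ∨ j = i + 1 + 1 := by lia
      exacts [hi, hi₁, (hstep _ hi₁).2.2]
    refine hu0 (funext fun ⟨j, k⟩ => ?_)
    fin_cases k
    exacts [(hstep j (hzero j)).1, hzero j, (hstep j (hzero j)).2.1]
  refine (hu k).lt_of_ne' ?_
  obtain ⟨i, j⟩ := k
  obtain ⟨h0, h2⟩ := hyz.ne_zero_of_middle_ne_zero hu (h i) (hmiddle i)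
  fin_cases j
  exacts [h0, hmiddle i, h2]

theorem eq_zero_of_separating_functional (φ : V →ₗ[ℝ] ℝ) {i : Fin 3}
    (hz : φ (z (i + 1)) = 0) (hy : φ (y (i + 2)) = 0)
    (h₀ : φ (y i) < 0) (h₁ : φ (z i) < 0) (h₂ : φ (y (i + 1)) < 0)
    (hu : ∀ k, 0 ≤ u k) (h : interlacingDefect y z u i = 0) (j : Fin 3) : u (i, j) = 0 := by
  have hφ := congrArg φ (interlacingDefect_eq_zero_iff.1 h)
  simp only [map_add, map_smul, smul_eq_mul, hz, hy, mul_zero, add_zero] at hφ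
  have hle₀ := mul_nonpos_of_nonneg_of_nonpos (hu (i, 0)) h₀.le
  have hle₁ := mul_nonpos_of_nonneg_of_nonpos (hu (i, 1)) h₁.le
  have hle₂ := mul_nonpos_of_nonneg_of_nonpos (hu (i, 2)) h₂.le
  have hzero₀ : u (i, 0) = 0 := (mul_eq_zero.1 (by linarith)).resolve_right h₀.ne
  have hzero₁ : u (i, 1) = 0 := (mul_eq_zero.1 (by linarith)).resolve_right h₁.ne
  have hzero₂ : u (i, 2) = 0 := (mul_eq_zero.1 (by linarith)).resolve_right h₂.ne
  fin_cases j
  exacts [hzero₀, hzero₁, hzero₂]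

/-- The linear map of the weights whose zeros balance all three triangles; the third defect is
determined by the first two. -/
def interlacingMap (y z : Fin 3 → V) : (Fin 3 × Fin 3 → ℝ) →ₗ[ℝ] V × V where
  toFun u := (interlacingDefect y z u 0, interlacingDefect y z u 1)
  map_add' u w := by
    simp only [interlacingDefect, Pi.add_apply, Prod.mk_add_mk, Prod.mk.injEq]
    constructor <;> module
  map_smul' c u := by
    simp only [interlacingDefect, Pi.smul_apply, smul_eq_mul, RingHom.id_apply, Prod.smul_mk,
      Prod.mk.injEq]
    constructor <;> module

theorem interlacingMap_eq_zero_iff :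
    interlacingMap y z u = 0 ↔ ∀ i, interlacingDefect y z u i = 0 := by
  have hsum := sum_interlacingDefect y z u
  rw [Fin.sum_univ_three] at hsum
  constructor
  · intro h
    obtain ⟨h0, h1⟩ := Prod.ext_iff.1 h
    change interlacingDefect y z u 0 = 0 at h0
    change interlacingDefect y z u 1 = 0 at h1
    rw [h0, h1, zero_add, zero_add] at hsum
    exact Fin.forall_fin_succ.2 ⟨h0, Fin.forall_fin_two.2 ⟨h1, hsum⟩⟩
  · exact fun h => Prod.ext (h 0) (h 1)

end Interlacing

section Hexagon

variable {E : Type*} [AddCommGroup E] [Module ℝ E]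

/-- The homogeneous coordinates of a point, which turn affine dependences into linear ones. -/
def homogeneousCoordinates (p : E) : ℝ × E := (1, p)

theorem conesSeparated_homogeneousCoordinates {a b c d : E}
    (h : Disjoint (segment ℝ a b) (segment ℝ c d)) :
    ConesSeparated (homogeneousCoordinates a) (homogeneousCoordinates b)
      (homogeneousCoordinates c) (homogeneousCoordinates d) := by
  intro p q r s hp hq hr hs heq
  obtain ⟨hweight, hpoint⟩ : p + q = r + s ∧ p • a + q • b = r • c + s • d := by
    simpa [homogeneousCoordinates] using heq
  rcases (add_nonneg hp hq).eq_or_lt' with hzero | hpos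
  · obtain ⟨rfl, rfl⟩ := (add_eq_zero_iff_of_nonneg hp hq).1 hzero
    obtain ⟨rfl, rfl⟩ := (add_eq_zero_iff_of_nonneg hr hs).1 (hweight ▸ hzero)
    simp
  · have hab : (p + q)⁻¹ • (p • a + q • b) ∈ segment ℝ a b :=
      ⟨p / (p + q), q / (p + q), by positivity, by positivity, by field_simp, by module⟩
    have hcd : (p + q)⁻¹ • (p • a + q • b) ∈ segment ℝ c d := by
      rw [hweight] at hpos
      rw [hpoint, hweight]
      exact ⟨r / (r + s), s / (r + s), by positivity, by positivity, by field_simp, by module⟩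
    exact (Set.disjoint_left.1 h hab hcd).elim

/-- The vertices `v 0`, `v 2`, `v 4` of a hexagon, in homogeneous coordinates. -/
def evenVertices (v : ℕ → E) (i : Fin 3) : ℝ × E := homogeneousCoordinates (v (2 * i))

/-- The vertices `v 1`, `v 3`, `v 5` of a hexagon, in homogeneous coordinates. -/
def oddVertices (v : ℕ → E) (i : Fin 3) : ℝ × E := homogeneousCoordinates (v (2 * i + 1))

/-- The hexagon `v 0, …, v 5` is interlaced if the triangles `v 0, v 1, v 2`, `v 2, v 3, v 4` and
`v 4, v 5, v 0` meet the edges `v 3, v 4`, `v 5, v 0` and `v 1, v 2` respectively, in such a way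
that the relations expressing this, in homogeneous coordinates and suitably scaled, add up to
zero. -/
def IsInterlaced (v : ℕ → E) : Prop :=
  ∃ u ∈ stdSimplex ℝ (Fin 3 × Fin 3), interlacingMap (evenVertices v) (oddVertices v) u = 0

theorem IsInterlaced.congr {v w : ℕ → E} (hv : IsInterlaced v) (h : ∀ i < 6, v i = w i) :
    IsInterlaced w := by
  have heven : evenVertices v = evenVertices w :=
    funext fun i => congrArg homogeneousCoordinates (h _ (by lia))
  have hodd : oddVertices v = oddVertices w :=
    funext fun i => congrArg homogeneousCoordinates (h _ (by lia))
  rwa [IsInterlaced, ← heven, ← hodd]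

end Hexagon

theorem IsSimpleClosedChain.disjoint_segment {n : ℕ} {v : ℕ → E3} (h : IsSimpleClosedChain n v)
    {i j : ℕ} (hi : i < n) (hj : j < n) (hij : i ≠ j) (hij' : (i + 1) % n ≠ j)
    (hji' : (j + 1) % n ≠ i) :
    Disjoint (segment ℝ (v i) (v ((i + 1) % n))) (segment ℝ (v j) (v ((j + 1) % n))) := by
  wlog hlt : i < j generalizing i j
  · exact (this hj hi hij.symm hji' hij' (by lia)).symm
  have hne : i + 1 ≠ j := fun heq => hij' (by rw [heq, Nat.mod_eq_of_lt hj])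
  have hne' : ¬(i = 0 ∧ j = n - 1) := by
    rintro ⟨rfl, rfl⟩
    exact hji' (by rw [Nat.sub_add_cancel hi, Nat.mod_self])
  have hinter := h.2.2 i j hlt hj
  rw [if_neg hne, if_neg hne'] at hinter
  exact Set.disjoint_iff_inter_eq_empty.2 hinter

theorem IsSimpleClosedChain.hexagonSeparated {v : ℕ → E3} (h : IsSimpleClosedChain 6 v) :
    HexagonSeparated (evenVertices v) (oddVertices v) := by
  have hsep {i j : ℕ} (hi : i < 6) (hj : j < 6) (hij : i ≠ j) (hij' : (i + 1) % 6 ≠ j)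
      (hji' : (j + 1) % 6 ≠ i) :=
    conesSeparated_homogeneousCoordinates (h.disjoint_segment hi hj hij hij' hji')
  constructor <;> intro i <;> fin_cases i <;> apply hsep <;> decide

theorem IsSimpleClosedChain.weights_pos {v : ℕ → E3} (h : IsSimpleClosedChain 6 v)
    {u : Fin 3 × Fin 3 → ℝ} (hu : u ∈ stdSimplex ℝ (Fin 3 × Fin 3))
    (huv : interlacingMap (evenVertices v) (oddVertices v) u = 0) (k : Fin 3 × Fin 3) :
    0 < u k := by
  have hu0 : u ≠ 0 := by
    rintro rfl
    simpa using hu.2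
  exact h.hexagonSeparated.forall_pos_of_interlacingDefect_eq_zero hu.1 hu0
    (interlacingMap_eq_zero_iff.1 huv) k

theorem continuous_toContinuousLinearMap_interlacingMap {X E : Type*} [TopologicalSpace X]
    [NormedAddCommGroup E] [NormedSpace ℝ E] {γ : X → ℕ → E}
    (hγ : ∀ i < 6, Continuous fun x => γ x i) :
    Continuous fun x => LinearMap.toContinuousLinearMap
      (interlacingMap (evenVertices (γ x)) (oddVertices (γ x))) := by
  refine continuous_clm_apply.2 fun u => ?_
  have heven : ∀ i, Continuous fun x => evenVertices (γ x) i := fun i =>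
    continuous_const.prodMk (hγ _ (by lia))
  have hodd : ∀ i, Continuous fun x => oddVertices (γ x) i := fun i =>
    continuous_const.prodMk (hγ _ (by lia))
  simp only [LinearMap.coe_toContinuousLinearMap', interlacingMap, LinearMap.coe_mk,
    AddHom.coe_mk, interlacingDefect]
  fun_prop

theorem IsInterlaced.of_preconnectedSpace {X : Type*} [TopologicalSpace X] [PreconnectedSpace X]
    {γ : X → ℕ → E3} (hγ : ∀ i < 6, Continuous fun x => γ x i)
    (hsimple : ∀ x, IsSimpleClosedChain 6 (γ x)) {x : X} (hx : IsInterlaced (γ x)) (y : X) :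
    IsInterlaced (γ y) :=
  exists_mem_stdSimplex_map_eq_zero_of_preconnectedSpace (by simp)
    (continuous_toContinuousLinearMap_interlacingMap hγ)
    (fun x _ hu hux => (hsimple x).weights_pos hu hux) hx y

theorem IsConvexConfiguration.not_isInterlaced {w : ℕ → E3} (hw : IsConvexConfiguration 6 w) :
    ¬ IsInterlaced w := by
  rintro ⟨u, hu, huw⟩
  have hzero : ∀ i j, u (i, j) = 0 := by
    intro i
    obtain ⟨f, hf, hlt⟩ := hw.2.2 ((2 * i + 3) % 6) (Nat.mod_lt _ (by norm_num))
    let φ : ℝ × E3 →ₗ[ℝ] ℝ :=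
      f ∘ₗ LinearMap.snd ℝ ℝ E3 - f (w ((2 * i + 3) % 6)) • LinearMap.fst ℝ ℝ E3
    have hφ : ∀ j, φ (homogeneousCoordinates (w j)) = f (w j) - f (w ((2 * i + 3) % 6)) :=
      fun j => by simp [φ, homogeneousCoordinates]
    have hedge : 2 * (i + 1 : Fin 3).val + 1 = (2 * i + 3) % 6 := by lia
    have hedge' : 2 * (i + 2 : Fin 3).val = ((2 * i + 3) % 6 + 1) % 6 := by lia
    have hneg : ∀ j : ℕ, j < 6 → j ≠ (2 * i + 3) % 6 → j ≠ ((2 * i + 3) % 6 + 1) % 6 →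
        φ (homogeneousCoordinates (w j)) < 0 := fun j hj hne hne' => by
      rw [hφ, sub_neg]
      exact hlt j hj hne hne'
    exact eq_zero_of_separating_functional φ
      (by rw [oddVertices, hedge, hφ, sub_self]) (by rw [evenVertices, hedge', hφ, hf, sub_self])
      (hneg _ (by lia) (by lia) (by lia)) (hneg _ (by lia) (by lia) (by lia))
      (hneg _ (by lia) (by lia) (by lia)) hu.1 (interlacingMap_eq_zero_iff.1 huw i)
  have hsum := hu.2
  simp [hzero] at hsum

/-- A hexagonal trefoil knot: the standard basis `e₀, e₁, e₂` alternating with the vectors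
`e₂ - e₁, e₀ - e₂, e₁ - e₀`. -/
def trefoil : ℕ → E3
  | 0 => !₂[1, 0, 0]
  | 1 => !₂[0, -1, 1]
  | 2 => !₂[0, 1, 0]
  | 3 => !₂[1, 0, -1]
  | 4 => !₂[0, 0, 1]
  | 5 => !₂[-1, 1, 0]
  | _ => 0

theorem isInterlaced_trefoil : IsInterlaced trefoil := by
  refine ⟨fun _ => 1 / 9, ⟨fun _ => by norm_num, by norm_num⟩, ?_⟩
  rw [interlacingMap_eq_zero_iff]
  intro i
  ext k
  · norm_num [interlacingDefect, evenVertices, oddVertices, homogeneousCoordinates]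
  · fin_cases i <;> fin_cases k <;>
    simp [interlacingDefect, evenVertices, oddVertices, homogeneousCoordinates, trefoil]

theorem segment_inter_segment_eq_singleton {E : Type*} [AddCommGroup E] [Module ℝ E] {p q r : E}
    (f : E →ₗ[ℝ] ℝ) (hpq : f p < f q) (hqr : f q ≤ f r) :
    segment ℝ p q ∩ segment ℝ q r = {q} := by
  refine Set.Subset.antisymm ?_
    (Set.singleton_subset_iff.2 ⟨right_mem_segment _ _ _, left_mem_segment _ _ _⟩)
  rintro _ ⟨⟨a, b, ha, hb, hab, rfl⟩, c, d, hc, hd, hcd, heq⟩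
  have hf := congrArg f heq
  simp only [map_add, map_smul, smul_eq_mul] at hf
  have ha0 : a = 0 := by
    obtain rfl : b = 1 - a := by linarith
    obtain rfl : c = 1 - d := by linarith
    nlinarith [mul_nonneg hd (sub_nonneg.2 hqr), mul_nonneg ha (sub_pos.2 hpq).le]
  obtain rfl : b = 1 := by linarith
  simp [ha0]

theorem trefoil_segment_inter_next {i : ℕ} (hi : i < 6) :
    segment ℝ (trefoil i) (trefoil ((i + 1) % 6)) ∩
      segment ℝ (trefoil ((i + 1) % 6)) (trefoil (((i + 1) % 6 + 1) % 6)) =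
      {trefoil ((i + 1) % 6)} := by
  -- Coordinate `2 * i` mod 3 drops along the `i`-th edge and does not increase along the next one.
  refine segment_inter_segment_eq_singleton
    (-(EuclideanSpace.proj (Fin.ofNat 3 (2 * i)) : E3 →L[ℝ] ℝ)).toLinearMap ?_ ?_ <;>
  interval_cases i <;> simp [trefoil, Fin.ofNat]

theorem disjoint_segment_trefoil {i j : ℕ} (hij : i + 1 < j) (hj : j < 6)
    (hne : ¬(i = 0 ∧ j = 5)) :
    Disjoint (segment ℝ (trefoil i) (trefoil (i + 1)))
      (segment ℝ (trefoil j) (trefoil ((j + 1) % 6))) := by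
  refine Set.disjoint_left.2 ?_
  rintro _ ⟨a, b, -, -, hab, rfl⟩ ⟨c, d, -, hd, hcd, heq⟩
  have hcoord : ∀ k, c * trefoil j k + d * trefoil ((j + 1) % 6) k =
      a * trefoil i k + b * trefoil (i + 1) k := fun k => by
    simpa using congrArg (fun x : E3 => x k) heq
  clear heq
  have hi : i < 4 := by lia
  interval_cases i <;> interval_cases j <;> first
    | lia
    | (simp [trefoil, Fin.forall_fin_succ] at hcoord
       linarith)

theorem trefoil_injOn : Set.InjOn trefoil (Set.Iio 6) := by
  intro i hi j hj h
  have hcoord := congrArg WithLp.ofLp h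
  rw [Set.mem_Iio] at hi hj
  interval_cases i <;> interval_cases j <;> simp [trefoil, funext_iff, Fin.forall_fin_succ] at *

theorem isSimpleClosedChain_trefoil : IsSimpleClosedChain 6 trefoil := by
  refine ⟨by norm_num, fun i j hi hj hij h => hij (trefoil_injOn hi hj h), fun i j hij hj => ?_⟩
  split_ifs with hnext hlast
  · subst hnext
    simpa only [Nat.mod_eq_of_lt hj] using trefoil_segment_inter_next (i := i) (by lia)
  · obtain ⟨rfl, rfl⟩ := hlast
    rw [Set.inter_comm]
    exact trefoil_segment_inter_next (i := 5) (by norm_num)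
  · rw [Nat.mod_eq_of_lt (by lia : i + 1 < 6)]
    exact (disjoint_segment_trefoil (by lia) hj hlast).inter_eq

theorem exists_locked_closed_chain_general :
    ∃ (n : ℕ) (v : ℕ → E3), IsSimpleClosedChain n v ∧
      ∀ γ : ℝ → ℕ → E3, (∀ i, i < n → ContinuousOn (fun t => γ t i) (Set.Icc 0 1)) →
        (∀ i, i < n → γ 0 i = v i) → (∀ t ∈ Set.Icc (0 : ℝ) 1, IsSimpleClosedChain n (γ t)) →
        ¬ IsConvexConfiguration n (γ 1) := by
  refine ⟨6, trefoil, isSimpleClosedChain_trefoil, fun γ hcont h0 hsimple hconv => ?_⟩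
  have hstart : IsInterlaced (γ 0) := isInterlaced_trefoil.congr fun i hi => (h0 i hi).symm
  have hend : IsInterlaced (γ 1) :=
    IsInterlaced.of_preconnectedSpace (X := unitInterval) (γ := fun t => γ t)
      (fun i hi => (hcont i hi).domRestrict) (fun t => hsimple t t.2) (x := 0) hstart 1
  exact hconv.not_isInterlaced hend

/-- There exists a locked simple closed polygonal chain in ℝ³:
a simple closed chain that cannot be convexified by any motion. -/
theorem exists_locked_closed_chain :
    ∃ (n : ℕ) (v : ℕ → E3), IsSimpleClosedChain n v ∧ ¬ CanBeConvexified n v := by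
  obtain ⟨n, v, hv, hlocked⟩ := exists_locked_closed_chain_general
  exact ⟨n, v, hv, fun ⟨γ, ⟨hcont, h0, hsimple, _⟩, hconv⟩ => hlocked γ hcont h0 hsimple hconv⟩
end
end
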